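/- Let X ~ N(0, I_{d×d}) be a standard Gaussian vector in ℝ^d and let F = f(X) for some f ∈ C²(ℝ^d) whose partial derivatives of order up to two have sub-exponential growth. Assume E[F] = 0 and E[F²] = σ² > 0, and let N ~ N(0, σ²). Then d_{KS}(F, N) ≤ (2/σ²) · √( Σ_{l,m=1}^d { E[ (⟨∇²_{l,·}F, ∇²_{m,·}F⟩)² ] }^{1/2} · { E[ (∇_l F · ∇_m F)² ] }^{1/2} ), where ∇_l F is the l-th partial derivative of f evaluated at X, ∇²_{l,·}F is the l-th row of the Hessian matrix of f evaluated at X, and ⟨·,·⟩ is the Euclidean inner product on ℝ^d. -/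

import Mathlib

open MeasureTheory ProbabilityTheory Real

/-- The Kolmogorov–Smirnov distance between two distributions on `ℝ`:
`sup_z |P(X ≤ z) − P(Y ≤ z)|`. -/
noncomputable def dKS (μ ν : Measure ℝ) : ℝ :=
  ⨆ z : ℝ, |(μ (Set.Iic z)).toReal - (ν (Set.Iic z)).toReal|

/-- The partial derivative `∂f/∂x_l` of `f : ℝ^d → ℝ` at `x`. -/
noncomputable def pderiv1 {d : ℕ} (f : (Fin d → ℝ) → ℝ) (l : Fin d)
    (x : Fin d → ℝ) : ℝ :=
  fderiv ℝ f x (Pi.single l 1)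

/-- The second partial derivative `∂²f/(∂x_l ∂x_m)` of `f : ℝ^d → ℝ` at `x`. -/
noncomputable def pderiv2 {d : ℕ} (f : (Fin d → ℝ) → ℝ) (l m : Fin d)
    (x : Fin d → ℝ) : ℝ :=
  fderiv ℝ (fun y => fderiv ℝ f y (Pi.single m 1)) x (Pi.single l 1)

/-! Let `X` and `X'` be independent with a common centered Gaussian law `μ`, and write `⟨·, ·⟩` for
the Cameron–Martin inner product of differentials, that is, the covariance form of `μ`.
Differentiating along the rotation `X_θ = cos θ X + sin θ X'` and integrating by parts gives
`Cov(g(X), h(X)) = ∫ θ in 0..π / 2, sin θ * 𝔼⟨∇g(X), ∇h(X_θ)⟩`.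

The case `g = h` is the Poincaré inequality. The case `g = ψ ∘ f`, `h = f`, with `ψ` the solution of
Stein's equation for a continuous approximation of an indicator `1_{(-∞, z]}`, bounds the
Kolmogorov–Smirnov distance of a centered `f(X)` to the Gaussian of the same variance `v` by `1 / v`
times the supremum over `θ` of the standard deviations of `K_θ = ⟨∇f(X), ∇f(X_θ)⟩`, because
`|ψ'| ≤ 1`. The Poincaré inequality for `K_θ` on the product space then brings in the contractions
`⟨∇²f(X), ∇f(X_θ)⟩` and `⟨∇²f(X_θ), ∇f(X)⟩`; Cauchy–Schwarz separates Hessian from gradient in their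
second moments, so that only the law of `X` is left in the bound. -/

section SubexponentialGrowth

variable {E E' G G₁ G₂ : Type*} [NormedAddCommGroup E] [NormedAddCommGroup E']
  [NormedAddCommGroup G] [NormedAddCommGroup G₁] [NormedAddCommGroup G₂]

/-- Continuous functions of sub-exponential growth: the class of integrands for which all Gaussian
integrals below converge. -/
structure IsSubexp (F : E → G) : Prop where
  continuous : Continuous F
  exists_norm_le : ∃ A B : ℝ, 0 ≤ A ∧ 0 ≤ B ∧ ∀ x, ‖F x‖ ≤ A * exp (B * ‖x‖)

namespace IsSubexp

lemma const (c : G) : IsSubexp fun _ : E ↦ c :=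
  ⟨continuous_const, ‖c‖, 0, norm_nonneg c, le_rfl, fun x ↦ by simp⟩

lemma id : IsSubexp fun x : E ↦ x :=
  ⟨continuous_id, 1, 1, zero_le_one, zero_le_one, fun x ↦ by
    linarith [add_one_le_exp (1 * ‖x‖)]⟩

lemma comp_of_norm_le {F : E → G} (hF : IsSubexp F) {T : E' → E} (hT : Continuous T) {C D : ℝ}
    (hC : 0 ≤ C) (hTC : ∀ x, ‖T x‖ ≤ C * ‖x‖ + D) : IsSubexp fun x ↦ F (T x) := by
  obtain ⟨A, B, hA, hB, hF_le⟩ := hF.exists_norm_le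
  refine ⟨hF.continuous.comp hT, A * exp (B * D), B * C, by positivity, by positivity,
    fun x ↦ ?_⟩
  calc ‖F (T x)‖ ≤ A * exp (B * ‖T x‖) := hF_le _
    _ ≤ A * exp (B * (C * ‖x‖ + D)) := by gcongr; exact hTC x
    _ = A * exp (B * D) * exp (B * C * ‖x‖) := by rw [mul_assoc, ← exp_add]; ring_nf

lemma comp_prodMk {F : E' × E → G} (hF : IsSubexp F) (a : E') : IsSubexp fun x ↦ F (a, x) :=
  hF.comp_of_norm_le (by fun_prop) zero_le_one (D := ‖a‖) fun x ↦ by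
    rw [Prod.norm_mk]
    exact max_le (by linarith [norm_nonneg x]) (by linarith [norm_nonneg a])

lemma of_norm_le {F : E → G} (hF : IsSubexp F) {H : E → G₁} (hH : Continuous H) {C D : ℝ}
    (hC : 0 ≤ C) (hD : 0 ≤ D) (hle : ∀ x, ‖H x‖ ≤ C * ‖F x‖ + D) : IsSubexp H := by
  obtain ⟨A, B, hA, hB, hF_le⟩ := hF.exists_norm_le
  refine ⟨hH, C * A + D, B, by positivity, hB, fun x ↦ ?_⟩
  calc ‖H x‖ ≤ C * (A * exp (B * ‖x‖)) + D * 1 := by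
        rw [mul_one]; refine (hle x).trans ?_; gcongr; exact hF_le x
    _ ≤ C * (A * exp (B * ‖x‖)) + D * exp (B * ‖x‖) := by
        gcongr; exact one_le_exp (by positivity)
    _ = (C * A + D) * exp (B * ‖x‖) := by ring

lemma add {F₁ F₂ : E → G} (h₁ : IsSubexp F₁) (h₂ : IsSubexp F₂) :
    IsSubexp fun x ↦ F₁ x + F₂ x := by
  obtain ⟨A₁, B₁, hA₁, hB₁, hF₁⟩ := h₁.exists_norm_le
  obtain ⟨A₂, B₂, hA₂, hB₂, hF₂⟩ := h₂.exists_norm_le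
  refine ⟨h₁.continuous.add h₂.continuous, A₁ + A₂, B₁ + B₂, by positivity, by positivity,
    fun x ↦ ?_⟩
  calc ‖F₁ x + F₂ x‖ ≤ A₁ * exp (B₁ * ‖x‖) + A₂ * exp (B₂ * ‖x‖) :=
        norm_add_le_of_le (hF₁ x) (hF₂ x)
    _ ≤ A₁ * exp ((B₁ + B₂) * ‖x‖) + A₂ * exp ((B₁ + B₂) * ‖x‖) := by gcongr <;> linarith
    _ = (A₁ + A₂) * exp ((B₁ + B₂) * ‖x‖) := by ring

lemma sum {ι : Type*} [Fintype ι] {F : ι → E → G} (hF : ∀ i, IsSubexp (F i)) :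
    IsSubexp fun x ↦ ∑ i, F i x := by
  refine ⟨continuous_finsetSum _ fun i _ ↦ (hF i).continuous, ?_⟩
  choose A B hA hB hF_le using fun i ↦ (hF i).exists_norm_le
  refine ⟨∑ i, A i, ∑ i, B i, Finset.sum_nonneg fun i _ ↦ hA i, Finset.sum_nonneg fun i _ ↦ hB i,
    fun x ↦ ?_⟩
  rw [Finset.sum_mul]
  refine norm_sum_le_of_le _ fun i _ ↦ (hF_le i x).trans ?_
  gcongr
  · exact hA i
  · exact Finset.single_le_sum (fun j _ ↦ hB j) (Finset.mem_univ i)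

variable [NormedSpace ℝ G] [NormedSpace ℝ G₁] [NormedSpace ℝ G₂]

lemma bilin (T : G₁ →L[ℝ] G₂ →L[ℝ] G) {F₁ : E → G₁} {F₂ : E → G₂} (h₁ : IsSubexp F₁)
    (h₂ : IsSubexp F₂) : IsSubexp fun x ↦ T (F₁ x) (F₂ x) := by
  obtain ⟨A₁, B₁, hA₁, hB₁, hF₁⟩ := h₁.exists_norm_le
  obtain ⟨A₂, B₂, hA₂, hB₂, hF₂⟩ := h₂.exists_norm_le
  refine ⟨T.continuous₂.comp₂ h₁.continuous h₂.continuous, ‖T‖ * A₁ * A₂, B₁ + B₂, by positivity,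
    by positivity, fun x ↦ ?_⟩
  calc ‖T (F₁ x) (F₂ x)‖ ≤ ‖T‖ * ‖F₁ x‖ * ‖F₂ x‖ := T.le_opNorm₂ _ _
    _ ≤ ‖T‖ * (A₁ * exp (B₁ * ‖x‖)) * (A₂ * exp (B₂ * ‖x‖)) := by gcongr; exacts [hF₁ x, hF₂ x]
    _ = ‖T‖ * A₁ * A₂ * exp ((B₁ + B₂) * ‖x‖) := by rw [add_mul, exp_add]; ring

lemma clm_apply {T : E → G₁ →L[ℝ] G} {F : E → G₁} (hT : IsSubexp T) (hF : IsSubexp F) :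
    IsSubexp fun x ↦ T x (F x) :=
  bilin (.id ℝ (G₁ →L[ℝ] G)) hT hF

lemma clm_comp (T : G₁ →L[ℝ] G) {F : E → G₁} (hF : IsSubexp F) : IsSubexp fun x ↦ T (F x) :=
  (const T).clm_apply hF

lemma mul {F₁ F₂ : E → ℝ} (h₁ : IsSubexp F₁) (h₂ : IsSubexp F₂) :
    IsSubexp fun x ↦ F₁ x * F₂ x :=
  bilin (.mul ℝ ℝ) h₁ h₂

lemma pow_two {F : E → ℝ} (h : IsSubexp F) : IsSubexp fun x ↦ F x ^ 2 := by
  simpa only [sq] using h.mul h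

end IsSubexp

lemma IsSubexp.of_apply_single {ι : Type*} [Fintype ι] [DecidableEq ι] [NormedSpace ℝ G]
    {F : E → (ι → ℝ) →L[ℝ] G} (hF : ∀ i, IsSubexp fun x ↦ F x (Pi.single i 1)) : IsSubexp F := by
  have coordinate_expansion : F = fun x ↦ ∑ i,
      ContinuousLinearMap.smulRightL ℝ (ι → ℝ) G (.proj i) (F x (Pi.single i 1)) := by
    ext x v
    simp [← map_smul, ← map_sum, ← Pi.single_smul, Finset.univ_sum_single]
  rw [coordinate_expansion]
  exact .sum fun i ↦ (hF i).clm_comp _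

variable [NormedSpace ℝ E] [NormedSpace ℝ E']

lemma IsSubexp.comp_clm {F : E → G} (hF : IsSubexp F) (T : E' →L[ℝ] E) : IsSubexp fun x ↦ F (T x) :=
  hF.comp_of_norm_le T.continuous (norm_nonneg T) (D := 0) fun x ↦ by
    simpa using T.le_opNorm x

section Integrals

variable [CompleteSpace E] [SecondCountableTopology E] [MeasurableSpace E] [BorelSpace E]
  (μ : Measure E) [IsGaussian μ]

lemma integrable_exp_mul_norm (B : ℝ) : Integrable (fun x ↦ exp (B * ‖x‖)) μ := by
  obtain ⟨C, hC, hint⟩ := IsGaussian.exists_integrable_exp_sq μ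
  refine (hint.const_mul (exp (B ^ 2 / (4 * C)))).mono' (by fun_prop) (ae_of_all _ fun x ↦ ?_)
  rw [norm_of_nonneg (exp_nonneg _), ← exp_add]
  gcongr
  have completed_square : B ^ 2 / (4 * C) + C * ‖x‖ ^ 2 - B * ‖x‖
      = C * (‖x‖ - B / (2 * C)) ^ 2 := by field_simp; ring
  have : 0 ≤ C * (‖x‖ - B / (2 * C)) ^ 2 := by positivity
  linarith

namespace IsSubexp

variable {μ}

lemma integrable {F : E → G} (hF : IsSubexp F) : Integrable F μ := by
  obtain ⟨A, B, -, -, hF_le⟩ := hF.exists_norm_le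
  exact ((integrable_exp_mul_norm μ B).const_mul A).mono'
    hF.continuous.aestronglyMeasurable (ae_of_all _ hF_le)

lemma memLp_two {F : E → ℝ} (hF : IsSubexp F) : MemLp F 2 μ :=
  (memLp_two_iff_integrable_sq hF.continuous.aestronglyMeasurable).2 hF.pow_two.integrable

lemma exists_integrable_bound {F : ℝ × E → G} (hF : IsSubexp F) (θ₀ : ℝ) :
    ∃ bound : E → ℝ, Integrable bound μ ∧
      ∀ θ ∈ Metric.ball θ₀ 1, ∀ x, ‖F (θ, x)‖ ≤ bound x := by
  obtain ⟨A, B, hA, hB, hF_le⟩ := hF.exists_norm_le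
  refine ⟨fun x ↦ A * exp (B * (|θ₀| + 1)) * exp (B * ‖x‖),
    (integrable_exp_mul_norm μ B).const_mul _, fun θ hθ x ↦ (hF_le _).trans ?_⟩
  beta_reduce
  rw [mul_assoc, ← exp_add, ← mul_add]
  gcongr
  have hθ' : ‖θ‖ ≤ |θ₀| + 1 := by
    have := norm_le_norm_add_norm_sub' θ θ₀
    rw [Metric.mem_ball, dist_eq_norm] at hθ
    rw [← norm_eq_abs]; linarith
  exact max_le (by linarith [norm_nonneg x]) (by linarith [norm_nonneg θ])

lemma continuous_integral {F : ℝ × E → ℝ} (hF : IsSubexp F) :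
    Continuous fun θ ↦ ∫ x, F (θ, x) ∂μ := by
  refine continuous_iff_continuousAt.2 fun θ₀ ↦ ?_
  obtain ⟨bound, hbound, hle⟩ := hF.exists_integrable_bound (μ := μ) θ₀
  refine continuousAt_of_dominated
    (.of_forall fun θ ↦ (hF.comp_prodMk θ).continuous.aestronglyMeasurable) ?_ hbound
    (ae_of_all _ fun x ↦ (hF.continuous.comp (by fun_prop)).continuousAt)
  filter_upwards [Metric.ball_mem_nhds θ₀ one_pos] with θ hθ using ae_of_all _ (hle θ hθ)

lemma hasDerivAt_integral {F F' : ℝ × E → ℝ} (hF : IsSubexp F) (hF' : IsSubexp F')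
    (hderiv : ∀ θ x, HasDerivAt (fun t ↦ F (t, x)) (F' (θ, x)) θ) (θ₀ : ℝ) :
    HasDerivAt (fun θ ↦ ∫ x, F (θ, x) ∂μ) (∫ x, F' (θ₀, x) ∂μ) θ₀ := by
  obtain ⟨bound, hbound, hle⟩ := hF'.exists_integrable_bound (μ := μ) θ₀
  exact (hasDerivAt_integral_of_dominated_loc_of_deriv_le (Metric.ball_mem_nhds θ₀ one_pos)
    (.of_forall fun θ ↦ (hF.comp_prodMk θ).continuous.aestronglyMeasurable)
    (hF.comp_prodMk θ₀).integrable (hF'.comp_prodMk θ₀).continuous.aestronglyMeasurable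
    (ae_of_all _ fun x θ hθ ↦ hle θ hθ x) hbound
    (ae_of_all _ fun x θ _ ↦ hderiv θ x)).2

end IsSubexp

end Integrals

variable [NormedSpace ℝ G] [NormedSpace ℝ G₁] [NormedSpace ℝ G₂]

/-- Continuously differentiable functions which have, together with their derivative,
sub-exponential growth. -/
structure IsC1Subexp (F : E → G) : Prop where
  contDiff : ContDiff ℝ 1 F
  isSubexp : IsSubexp F
  isSubexp_fderiv : IsSubexp (fderiv ℝ F)

namespace IsC1Subexp

lemma hasFDerivAt {F : E → G} (hF : IsC1Subexp F) (x : E) : HasFDerivAt F (fderiv ℝ F x) x :=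
  (hF.contDiff.differentiable one_ne_zero x).hasFDerivAt

lemma comp_clm {F : E → G} (hF : IsC1Subexp F) (T : E' →L[ℝ] E) :
    IsC1Subexp fun x ↦ F (T x) where
  contDiff := hF.contDiff.comp T.contDiff
  isSubexp := hF.isSubexp.comp_clm T
  isSubexp_fderiv := by
    have : fderiv ℝ (fun x ↦ F (T x)) = fun x ↦
        (ContinuousLinearMap.compL ℝ E' E G).flip T (fderiv ℝ F (T x)) := by
      ext1 x
      exact ((hF.hasFDerivAt (T x)).comp x T.hasFDerivAt).fderiv
    rw [this]
    exact (hF.isSubexp_fderiv.comp_clm T).clm_comp _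

lemma comp_prodMk {F : E' × E → G} (hF : IsC1Subexp F) (a : E') :
    IsC1Subexp fun x ↦ F (a, x) where
  contDiff := hF.contDiff.comp (contDiff_prodMk_right a)
  isSubexp := hF.isSubexp.comp_prodMk a
  isSubexp_fderiv := by
    have : fderiv ℝ (fun x ↦ F (a, x)) = fun x ↦
        (ContinuousLinearMap.compL ℝ E (E' × E) G).flip (.inr ℝ E' E) (fderiv ℝ F (a, x)) := by
      ext1 x
      exact ((hF.hasFDerivAt (a, x)).comp x (hasFDerivAt_prodMk_right a x)).fderiv
    rw [this]
    exact (hF.isSubexp_fderiv.comp_prodMk a).clm_comp _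

lemma of_clm (T : E →L[ℝ] G) : IsC1Subexp fun x ↦ T x where
  contDiff := T.contDiff
  isSubexp := IsSubexp.id.clm_comp T
  isSubexp_fderiv := by
    rw [show fderiv ℝ (fun x ↦ T x) = fun _ ↦ T from funext fun x ↦ T.fderiv]
    exact .const T

lemma bilin (T : G₁ →L[ℝ] G₂ →L[ℝ] G) {F₁ : E → G₁} {F₂ : E → G₂} (h₁ : IsC1Subexp F₁)
    (h₂ : IsC1Subexp F₂) : IsC1Subexp fun x ↦ T (F₁ x) (F₂ x) where
  contDiff := T.isBoundedBilinearMap.contDiff.comp₂ h₁.contDiff h₂.contDiff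
  isSubexp := .bilin T h₁.isSubexp h₂.isSubexp
  isSubexp_fderiv := by
    have : fderiv ℝ (fun x ↦ T (F₁ x) (F₂ x)) = fun x ↦
        T.precompR E (F₁ x) (fderiv ℝ F₂ x) + T.precompL E (fderiv ℝ F₁ x) (F₂ x) := by
      ext1 x
      exact (T.hasFDerivAt_of_bilinear (h₁.hasFDerivAt x) (h₂.hasFDerivAt x)).fderiv
    rw [this]
    exact (IsSubexp.bilin _ h₁.isSubexp h₂.isSubexp_fderiv).add
      (.bilin _ h₁.isSubexp_fderiv h₂.isSubexp)

lemma mul {F₁ F₂ : E → ℝ} (h₁ : IsC1Subexp F₁) (h₂ : IsC1Subexp F₂) :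
    IsC1Subexp fun x ↦ F₁ x * F₂ x :=
  bilin (.mul ℝ ℝ) h₁ h₂

lemma fderiv_comp {f : E → ℝ} (hf : IsC1Subexp f) {ψ : ℝ → ℝ} (hψ : Differentiable ℝ ψ) :
    fderiv ℝ (fun x ↦ ψ (f x)) = fun x ↦ deriv ψ (f x) • fderiv ℝ f x := by
  ext1 x
  exact ((hψ (f x)).hasDerivAt.comp_hasFDerivAt x (hf.hasFDerivAt x)).fderiv

lemma comp_of_deriv_bounded {f : E → ℝ} (hf : IsC1Subexp f) {ψ : ℝ → ℝ} (hψ : ContDiff ℝ 1 ψ)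
    {C : ℝ} (hC : ∀ t, |deriv ψ t| ≤ C) : IsC1Subexp fun x ↦ ψ (f x) where
  contDiff := hψ.comp hf.contDiff
  isSubexp := by
    refine hf.isSubexp.of_norm_le (hψ.continuous.comp hf.isSubexp.continuous)
      ((abs_nonneg _).trans (hC 0)) (abs_nonneg (ψ 0)) fun x ↦ ?_
    have mean_value : ‖ψ (f x) - ψ 0‖ ≤ C * ‖f x - 0‖ :=
      convex_univ.norm_image_sub_le_of_norm_deriv_le
        (fun t _ ↦ hψ.differentiable one_ne_zero t) (fun t _ ↦ hC t) trivial trivial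
    rw [sub_zero] at mean_value
    exact (norm_le_norm_add_norm_sub' _ (ψ 0)).trans
      ((add_comm _ _).trans_le (by gcongr; exact le_rfl))
  isSubexp_fderiv := by
    rw [hf.fderiv_comp (hψ.differentiable one_ne_zero)]
    exact .bilin (.lsmul ℝ ℝ) (hf.isSubexp.of_norm_le ((hψ.continuous_deriv le_rfl).comp
      hf.isSubexp.continuous) le_rfl ((abs_nonneg _).trans (hC 0))
      fun x ↦ by simpa using hC (f x)) hf.isSubexp_fderiv

end IsC1Subexp

end SubexponentialGrowth

lemma integral_comp_of_measurePreserving {Ω Ω' : Type*} [MeasurableSpace Ω] [MeasurableSpace Ω']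
    {P : Measure Ω} {P' : Measure Ω'} {T : Ω → Ω'} (hT : MeasurePreserving T P P') {F : Ω' → ℝ}
    (hF : AEStronglyMeasurable F P') : ∫ ω, F (T ω) ∂P = ∫ ω, F ω ∂P' := by
  rw [← hT.map_eq] at hF ⊢
  exact (integral_map hT.aemeasurable hF).symm

section RotationInvariance

open ContinuousLinearMap renaming rotation → rot, rotation_apply → rot_apply

variable {E : Type*} [NormedAddCommGroup E] [NormedSpace ℝ E]

/-- The linear map `(x, y) ↦ cos θ • x + sin θ • y`; under a centered Gaussian product measure its
value is a copy of the first coordinate, correlated to it by `cos θ`. -/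
noncomputable def rotatedCopy (θ : ℝ) : E × E →L[ℝ] E :=
  .comp (.fst ℝ E E) (rot θ)

lemma norm_rotation_le (θ : ℝ) (p : E × E) : ‖rot θ p‖ ≤ 2 * ‖p‖ := by
  have norm_combination_le {a b : ℝ} (ha : |a| ≤ 1) (hb : |b| ≤ 1) :
      ‖a • p.1 + b • p.2‖ ≤ 2 * ‖p‖ := by
    have hfst : ‖a • p.1‖ ≤ 1 * ‖p‖ :=
      (norm_smul_le _ _).trans (by gcongr; exacts [ha, norm_fst_le p])
    have hsnd : ‖b • p.2‖ ≤ 1 * ‖p‖ :=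
      (norm_smul_le _ _).trans (by gcongr; exacts [hb, norm_snd_le p])
    linarith [norm_add_le_of_le hfst hsnd]
  rw [rot_apply]
  exact max_le (norm_combination_le (abs_cos_le_one θ) (abs_sin_le_one θ))
    (norm_combination_le (by simpa using abs_sin_le_one θ) (abs_cos_le_one θ))

lemma rotatedCopy_neg_rotation (θ : ℝ) (p : E × E) : rotatedCopy (-θ) (rot θ p) = p.1 := by
  have : cos (-θ) • (cos θ • p.1 + sin θ • p.2) + sin (-θ) • (-sin θ • p.1 + cos θ • p.2)
      = (sin θ ^ 2 + cos θ ^ 2) • p.1 := by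
    rw [cos_neg, sin_neg]; module
  exact this.trans (by rw [sin_sq_add_cos_sq, one_smul])

lemma hasDerivAt_rotatedCopy (θ : ℝ) (p : E × E) :
    HasDerivAt (fun t ↦ rotatedCopy t p) (rot θ p).2 θ :=
  ((hasDerivAt_cos θ).smul_const p.1).add ((hasDerivAt_sin θ).smul_const p.2)

lemma hasDerivAt_rotation (θ : ℝ) (p : E × E) :
    HasDerivAt (fun t ↦ rot t p) ((rot θ p).2, -(rot θ p).1) θ := by
  have hsnd : HasDerivAt (fun t ↦ (rot t p).2) (-cos θ • p.1 + -sin θ • p.2) θ :=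
    ((hasDerivAt_sin θ).neg.smul_const p.1).add ((hasDerivAt_cos θ).smul_const p.2)
  rw [show -(rot θ p).1 = -cos θ • p.1 + -sin θ • p.2 by rw [rot_apply]; module]
  exact (hasDerivAt_rotatedCopy θ p).prodMk hsnd

lemma IsSubexp.comp_rotation {G : Type*} [NormedAddCommGroup G] {F : E × E → G}
    (hF : IsSubexp F) : IsSubexp fun q : ℝ × E × E ↦ F (rot q.1 q.2) := by
  refine hF.comp_of_norm_le (C := 2) (D := 0) ?_ two_pos.le fun q ↦ ?_
  · simp only [rot_apply]
    fun_prop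
  · linarith [norm_rotation_le q.1 q.2, norm_snd_le q]

lemma fderiv_comp_rotatedCopy_prodMk {g : E → ℝ} (hg : IsC1Subexp g) (θ : ℝ) (x y : E) :
    fderiv ℝ (fun y ↦ g (rotatedCopy θ (x, y))) y
      = sin θ • fderiv ℝ g (rotatedCopy θ (x, y)) := by
  have hcopy : HasFDerivAt (fun y ↦ rotatedCopy θ (x, y)) (sin θ • .id ℝ E) y :=
    (((hasFDerivAt_id y).const_smul (sin θ)).const_add (cos θ • x))
  exact ((hg.hasFDerivAt _).comp y hcopy).fderiv.trans (by ext; simp)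

variable [CompleteSpace E] [SecondCountableTopology E] [MeasurableSpace E] [BorelSpace E]
  {μ : Measure E} [IsGaussian μ]

lemma measurePreserving_rotation (hμ : μ[id] = 0) (θ : ℝ) :
    MeasurePreserving (rot θ) (μ.prod μ) (μ.prod μ) :=
  ⟨by fun_prop, IsGaussian.map_rotation_eq_self hμ θ⟩

lemma measurePreserving_rotatedCopy (hμ : μ[id] = 0) (θ : ℝ) :
    MeasurePreserving (rotatedCopy θ) (μ.prod μ) μ :=
  measurePreserving_fst.comp (measurePreserving_rotation hμ θ)

lemma integral_comp_rotation (hμ : μ[id] = 0) (θ : ℝ) {F : E × E → ℝ} (hF : Continuous F) :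
    ∫ p, F (rot θ p) ∂(μ.prod μ) = ∫ p, F p ∂(μ.prod μ) :=
  integral_comp_of_measurePreserving (measurePreserving_rotation hμ θ) hF.aestronglyMeasurable

end RotationInvariance

lemma integral_sin_mul_le {a : ℝ → ℝ} (ha : Continuous a) {D : ℝ} (hD : ∀ θ, a θ ≤ D) :
    ∫ θ in 0..π / 2, sin θ * a θ ≤ D :=
  calc ∫ θ in 0..π / 2, sin θ * a θ ≤ ∫ θ in 0..π / 2, sin θ * D := by
        refine intervalIntegral.integral_mono_on (by positivity)
          ((continuous_sin.mul ha).intervalIntegrable _ _)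
          ((continuous_sin.mul continuous_const).intervalIntegrable _ _) fun θ hθ ↦ ?_
        exact mul_le_mul_of_nonneg_left (hD θ)
          (sin_nonneg_of_nonneg_of_le_pi hθ.1 (by linarith [hθ.2, pi_pos]))
    _ = D := by
        rw [intervalIntegral.integral_mul_const, integral_sin, cos_zero, cos_pi_div_two, sub_zero,
          one_mul]

lemma abs_integral_sin_mul_le {a : ℝ → ℝ} (ha : Continuous a) {D : ℝ} (hD : ∀ θ, |a θ| ≤ D) :
    |∫ θ in 0..π / 2, sin θ * a θ| ≤ D := by
  have hneg := integral_sin_mul_le ha.neg fun θ ↦ (neg_le_abs _).trans (hD θ)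
  simp only [Pi.neg_apply, mul_neg, intervalIntegral.integral_neg] at hneg
  exact abs_le'.2 ⟨integral_sin_mul_le ha fun θ ↦ (le_abs_self _).trans (hD θ), hneg⟩

local notation "𝒞[" μ "]" => uncenteredCovarianceBilinDual μ

section GaussianCalculus

open ContinuousLinearMap renaming rotation → rot

variable {E : Type*} [NormedAddCommGroup E] [NormedSpace ℝ E] [MeasurableSpace E] [BorelSpace E]
  {μ : Measure E}

/-- The carré du champ `Γ(g, h)` of a Gaussian measure with its two factors decoupled: `∇g` is taken
at the first coordinate and `∇h` at its copy rotated by the angle `θ`. -/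
noncomputable def rotatedCarreDuChamp (μ : Measure E) (g h : E → ℝ) (θ : ℝ) (p : E × E) : ℝ :=
  𝒞[μ] (fderiv ℝ g p.1) (fderiv ℝ h (rotatedCopy θ p))

lemma IsSubexp.rotatedCarreDuChamp {g h : E → ℝ} (hg : IsC1Subexp g) (hh : IsC1Subexp h) :
    IsSubexp fun q : ℝ × E × E ↦ rotatedCarreDuChamp μ g h q.1 q.2 :=
  .bilin _
    (hg.isSubexp_fderiv.comp_clm ((ContinuousLinearMap.fst ℝ E E).comp (.snd ℝ ℝ (E × E))))
    (hh.isSubexp_fderiv.comp_clm (.fst ℝ E E)).comp_rotation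

lemma rotatedCarreDuChamp_comp {f g : E → ℝ} (hf : IsC1Subexp f) {ψ : ℝ → ℝ}
    (hψ : Differentiable ℝ ψ) (θ : ℝ) (p : E × E) :
    rotatedCarreDuChamp μ (fun x ↦ ψ (f x)) g θ p
      = deriv ψ (f p.1) * rotatedCarreDuChamp μ f g θ p := by
  simp [rotatedCarreDuChamp, hf.fderiv_comp hψ]

variable [CompleteSpace E] [SecondCountableTopology E] [IsGaussian μ]

lemma continuous_integral_rotatedCarreDuChamp {g h : E → ℝ} (hg : IsC1Subexp g)
    (hh : IsC1Subexp h) :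
    Continuous fun θ ↦ ∫ p, rotatedCarreDuChamp μ g h θ p ∂(μ.prod μ) :=
  (IsSubexp.rotatedCarreDuChamp hg hh).continuous_integral

lemma covForm_apply (L₁ L₂ : StrongDual ℝ E) : 𝒞[μ] L₁ L₂ = ∫ x, L₁ x * L₂ x ∂μ :=
  uncenteredCovarianceBilinDual_apply IsGaussian.memLp_two_id L₁ L₂

lemma integral_fderiv_rotation_eq_zero (hμ : μ[id] = 0) {G : E × E → ℝ} (hG : IsC1Subexp G) :
    ∫ p, fderiv ℝ G p (p.2, -p.1) ∂(μ.prod μ) = 0 := by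
  have hG' : IsSubexp fun p ↦ fderiv ℝ G p (p.2, -p.1) :=
    hG.isSubexp_fderiv.clm_apply
      (IsSubexp.id.clm_comp ((ContinuousLinearMap.snd ℝ E E).prod (-.fst ℝ E E)))
  have hderiv := hG.isSubexp.comp_rotation.hasDerivAt_integral (μ := μ.prod μ) hG'.comp_rotation
    (fun θ p ↦ (hG.hasFDerivAt _).comp_hasDerivAt θ (hasDerivAt_rotation θ p)) 0
  simp only [integral_comp_rotation hμ _ hG.isSubexp.continuous] at hderiv
  rw [← integral_comp_rotation hμ 0 hG'.continuous]
  exact hderiv.unique (hasDerivAt_const 0 _)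

lemma integral_mul_dual (hμ : μ[id] = 0) {u : E → ℝ} (hu : IsC1Subexp u) (L : StrongDual ℝ E) :
    ∫ x, u x * L x ∂μ = ∫ x, 𝒞[μ] (fderiv ℝ u x) L ∂μ := by
  have hG : IsC1Subexp fun p : E × E ↦ u p.1 * L p.2 :=
    (hu.comp_clm (.fst ℝ E E)).mul (.of_clm (L.comp (.snd ℝ E E)))
  have h₁ : IsSubexp fun p : E × E ↦ fderiv ℝ u p.1 p.2 * L p.2 :=
    ((hu.isSubexp_fderiv.comp_clm (.fst ℝ E E)).clm_apply
      (IsSubexp.id.clm_comp (.snd ℝ E E))).mul (IsSubexp.id.clm_comp (L.comp (.snd ℝ E E)))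
  have h₂ : IsSubexp fun p : E × E ↦ u p.1 * L p.1 :=
    (hu.isSubexp.mul (IsSubexp.id.clm_comp L)).comp_clm (.fst ℝ E E)
  have hfderiv (p : E × E) : fderiv ℝ (fun p : E × E ↦ u p.1 * L p.2) p (p.2, -p.1)
      = fderiv ℝ u p.1 p.2 * L p.2 - u p.1 * L p.1 := by
    have hderiv := ((hu.hasFDerivAt p.1).comp p hasFDerivAt_fst).mul
      (L.hasFDerivAt.comp p hasFDerivAt_snd)
    refine (congrArg (· (p.2, -p.1)) hderiv.fderiv).trans ?_
    simp
    ring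
  have hzero := integral_fderiv_rotation_eq_zero hμ hG
  simp only [hfderiv] at hzero
  rw [integral_sub h₁.integrable h₂.integrable, sub_eq_zero, integral_prod _ h₁.integrable,
    integral_fun_fst (fun x ↦ u x * L x)] at hzero
  simpa [covForm_apply] using hzero.symm

lemma integral_mul_fderiv_rotatedCopy (hμ : μ[id] = 0) {g h : E → ℝ} (hg : IsC1Subexp g)
    (hh : IsC1Subexp h) (θ : ℝ) :
    ∫ p, g p.1 * fderiv ℝ h (rotatedCopy θ p) (rot θ p).2 ∂(μ.prod μ)
      = -(sin θ * ∫ p, rotatedCarreDuChamp μ g h θ p ∂(μ.prod μ)) := by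
  have hg' := hg.comp_clm (rotatedCopy (-θ))
  have h₁ : IsSubexp fun q : E × E ↦ g (rotatedCopy (-θ) q) * fderiv ℝ h q.1 q.2 :=
    hg'.isSubexp.mul ((hh.isSubexp_fderiv.comp_clm (.fst ℝ E E)).clm_apply
      (IsSubexp.id.clm_comp (.snd ℝ E E)))
  have h₂ : IsSubexp fun q : E × E ↦
      𝒞[μ] (fderiv ℝ g (rotatedCopy (-θ) q)) (fderiv ℝ h q.1) :=
    .bilin _ (hg.isSubexp_fderiv.comp_clm _) (hh.isSubexp_fderiv.comp_clm (.fst ℝ E E))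
  have inner (x : E) : ∫ y, g (rotatedCopy (-θ) (x, y)) * fderiv ℝ h x y ∂μ
      = -sin θ * ∫ y, 𝒞[μ] (fderiv ℝ g (rotatedCopy (-θ) (x, y))) (fderiv ℝ h x) ∂μ := by
    rw [integral_mul_dual hμ (hg'.comp_prodMk x), ← integral_const_mul]
    simp [fderiv_comp_rotatedCopy_prodMk hg]
  have h₁_rot := integral_comp_rotation hμ θ h₁.continuous
  have h₂_rot := integral_comp_rotation hμ θ h₂.continuous
  simp only [rotatedCopy_neg_rotation] at h₁_rot h₂_rot
  calc _ = ∫ q, g (rotatedCopy (-θ) q) * fderiv ℝ h q.1 q.2 ∂(μ.prod μ) := h₁_rot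
    _ = -sin θ * ∫ q, 𝒞[μ] (fderiv ℝ g (rotatedCopy (-θ) q)) (fderiv ℝ h q.1) ∂(μ.prod μ) := by
      rw [integral_prod _ h₁.integrable, integral_prod _ h₂.integrable]
      simp only [inner, integral_const_mul]
    _ = _ := by rw [← h₂_rot, neg_mul]; rfl

lemma hasDerivAt_integral_mul_rotatedCopy (hμ : μ[id] = 0) {g h : E → ℝ} (hg : IsC1Subexp g)
    (hh : IsC1Subexp h) (θ : ℝ) :
    HasDerivAt (fun θ ↦ ∫ p, g p.1 * h (rotatedCopy θ p) ∂(μ.prod μ))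
      (-(sin θ * ∫ p, rotatedCarreDuChamp μ g h θ p ∂(μ.prod μ))) θ := by
  have hg_fst : IsSubexp fun q : ℝ × E × E ↦ g q.2.1 :=
    hg.isSubexp.comp_clm ((ContinuousLinearMap.fst ℝ E E).comp (.snd ℝ ℝ (E × E)))
  have hh_copy : IsSubexp fun q : ℝ × E × E ↦ h (rotatedCopy q.1 q.2) :=
    (hh.isSubexp.comp_clm (.fst ℝ E E)).comp_rotation
  have hderiv_copy :
      IsSubexp fun q : ℝ × E × E ↦ fderiv ℝ h (rotatedCopy q.1 q.2) (rot q.1 q.2).2 :=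
    ((hh.isSubexp_fderiv.comp_clm (.fst ℝ E E)).clm_apply
      (IsSubexp.id.clm_comp (.snd ℝ E E))).comp_rotation
  rw [← integral_mul_fderiv_rotatedCopy hμ hg hh]
  exact (hg_fst.mul hh_copy).hasDerivAt_integral (hg_fst.mul hderiv_copy)
    (fun t p ↦
      ((hh.hasFDerivAt _).comp_hasDerivAt t (hasDerivAt_rotatedCopy t p)).const_mul (g p.1)) θ

lemma covariance_eq_integral_rotatedCopy (hμ : μ[id] = 0) {g h : E → ℝ} (hg : IsC1Subexp g)
    (hh : IsC1Subexp h) :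
    cov[g, h; μ] = ∫ θ in 0..π / 2, sin θ *
      ∫ p, rotatedCarreDuChamp μ g h θ p ∂(μ.prod μ) := by
  have hderiv_cont :=
    (continuous_sin.mul (continuous_integral_rotatedCarreDuChamp (μ := μ) hg hh)).neg
  have hftc := intervalIntegral.integral_eq_sub_of_hasDerivAt
    (fun θ _ ↦ hasDerivAt_integral_mul_rotatedCopy hμ hg hh θ)
    (hderiv_cont.intervalIntegrable 0 (π / 2))
  have correlated : ∫ p : E × E, g p.1 * h (rotatedCopy 0 p) ∂(μ.prod μ) = ∫ x, g x * h x ∂μ := by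
    simpa [rotatedCopy, ContinuousLinearMap.rotation_apply]
      using integral_fun_fst (μ := μ) (ν := μ) fun x ↦ g x * h x
  have independent : ∫ p : E × E, g p.1 * h (rotatedCopy (π / 2) p) ∂(μ.prod μ)
      = (∫ x, g x ∂μ) * ∫ x, h x ∂μ := by
    simpa [rotatedCopy, ContinuousLinearMap.rotation_apply] using integral_prod_mul g h
  rw [intervalIntegral.integral_neg, correlated, independent] at hftc
  rw [covariance_eq_sub hg.isSubexp.memLp_two hh.isSubexp.memLp_two]
  simp only [Pi.mul_apply]
  linarith

lemma covForm_le_half_add_half (L₁ L₂ : StrongDual ℝ E) :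
    𝒞[μ] L₁ L₂ ≤ 𝒞[μ] L₁ L₁ / 2 + 𝒞[μ] L₂ L₂ / 2 := by
  have hsubexp (L L' : StrongDual ℝ E) : Integrable (fun x ↦ L x * L' x) μ :=
    ((IsSubexp.id.clm_comp L).mul (IsSubexp.id.clm_comp L')).integrable
  simp only [covForm_apply]
  rw [← integral_div, ← integral_div,
    ← integral_add ((hsubexp L₁ L₁).div_const 2) ((hsubexp L₂ L₂).div_const 2)]
  refine integral_mono (hsubexp L₁ L₂)
    (((hsubexp L₁ L₁).div_const 2).add ((hsubexp L₂ L₂).div_const 2)) fun x ↦ ?_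
  change L₁ x * L₂ x ≤ L₁ x * L₁ x / 2 + L₂ x * L₂ x / 2
  linarith [sq_nonneg (L₁ x - L₂ x)]

theorem gaussian_poincare (hμ : μ[id] = 0) {g : E → ℝ} (hg : IsC1Subexp g) :
    Var[g; μ] ≤ ∫ x, 𝒞[μ] (fderiv ℝ g x) (fderiv ℝ g x) ∂μ := by
  set energy : E → ℝ := fun x ↦ 𝒞[μ] (fderiv ℝ g x) (fderiv ℝ g x)
  have henergy : IsSubexp energy := .bilin _ hg.isSubexp_fderiv hg.isSubexp_fderiv
  rw [← covariance_self hg.isSubexp.continuous.aemeasurable,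
    covariance_eq_integral_rotatedCopy hμ hg hg]
  refine integral_sin_mul_le (continuous_integral_rotatedCarreDuChamp hg hg) fun θ ↦ ?_
  have h₁ : Integrable (fun p : E × E ↦ energy p.1 / 2) (μ.prod μ) :=
    (henergy.comp_clm (.fst ℝ E E)).integrable.div_const 2
  have h₂ : Integrable (fun p : E × E ↦ energy (rotatedCopy θ p) / 2) (μ.prod μ) :=
    (henergy.comp_clm (rotatedCopy θ)).integrable.div_const 2
  calc _ ≤ ∫ p, (energy p.1 / 2 + energy (rotatedCopy θ p) / 2) ∂(μ.prod μ) :=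
        integral_mono ((IsSubexp.rotatedCarreDuChamp hg hg).comp_prodMk θ).integrable (h₁.add h₂)
          fun p ↦ covForm_le_half_add_half _ _
    _ = ∫ x, energy x ∂μ := by
      have hmeas := henergy.continuous.aestronglyMeasurable (μ := μ)
      rw [integral_add h₁ h₂, integral_div, integral_div,
        integral_comp_of_measurePreserving measurePreserving_fst hmeas,
        integral_comp_of_measurePreserving (measurePreserving_rotatedCopy hμ θ) hmeas, add_halves]

end GaussianCalculus

section SteinDiscrepancy

lemma abs_covariance_le_sqrt_variance {Ω : Type*} [MeasurableSpace Ω] {P : Measure Ω}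
    [IsProbabilityMeasure P] {W K : Ω → ℝ} (hW : AEStronglyMeasurable W P)
    (hW_le : ∀ ω, |W ω| ≤ 1) (hK : MemLp K 2 P) : |cov[W, K; P]| ≤ √Var[K; P] := by
  have hK' : MemLp (fun ω ↦ K ω - P[K]) 2 P := hK.sub (memLp_const _)
  have habsK' : MemLp (fun ω ↦ |K ω - P[K]|) 2 P := hK'.abs
  have hW' : MemLp W 2 P := .of_bound hW 1 (ae_of_all _ hW_le)
  have hWK : cov[W, K; P] = ∫ ω, W ω * (K ω - P[K]) ∂P := by
    rw [← covariance_sub_const_right (hK.integrable one_le_two) P[K],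
      covariance_eq_sub hW' hK', integral_sub (hK.integrable one_le_two) (integrable_const _)]
    simp
  have hvar : ∫ ω, |K ω - P[K]| ^ 2 ∂P = Var[K; P] := by
    simp only [sq_abs, variance_eq_integral hK.aemeasurable]
  rw [hWK]
  apply le_sqrt_of_sq_le
  calc |∫ ω, W ω * (K ω - P[K]) ∂P| ^ 2 ≤ (∫ ω, |K ω - P[K]| ∂P) ^ 2 := by
        gcongr
        refine (norm_integral_le_integral_norm _).trans
          (integral_mono ((hW'.integrable_mul hK').norm) (hK'.integrable one_le_two).abs
            fun ω ↦ ?_)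
        exact (norm_mul _ _).trans_le <| mul_le_of_le_one_left (abs_nonneg _) (hW_le ω)
    _ ≤ ∫ ω, |K ω - P[K]| ^ 2 ∂P := by
        have hnonneg := variance_nonneg (fun ω ↦ |K ω - P[K]|) P
        rw [variance_eq_sub habsK'] at hnonneg
        exact sub_nonneg.1 hnonneg
    _ = Var[K; P] := hvar

variable {E : Type*} [NormedAddCommGroup E] [NormedSpace ℝ E] [CompleteSpace E]
  [SecondCountableTopology E] [MeasurableSpace E] [BorelSpace E] {μ : Measure E} [IsGaussian μ]

lemma covariance_rotatedCarreDuChamp {f : E → ℝ} (hf : IsC1Subexp f) {ψ : ℝ → ℝ}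
    (hψ : ContDiff ℝ 1 ψ) {C : ℝ} (hC : ∀ t, |deriv ψ t| ≤ C) (θ : ℝ) :
    cov[fun p : E × E ↦ deriv ψ (f p.1), rotatedCarreDuChamp μ f f θ; μ.prod μ]
      = (∫ p, rotatedCarreDuChamp μ (fun x ↦ ψ (f x)) f θ p ∂(μ.prod μ))
        - (∫ x, deriv ψ (f x) ∂μ) * ∫ p, rotatedCarreDuChamp μ f f θ p ∂(μ.prod μ) := by
  have hweight : Continuous fun x ↦ deriv ψ (f x) :=
    (hψ.continuous_deriv le_rfl).comp hf.isSubexp.continuous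
  have hweight_fst : AEStronglyMeasurable (fun p : E × E ↦ deriv ψ (f p.1)) (μ.prod μ) :=
    (hweight.comp continuous_fst).aestronglyMeasurable
  have hK : MemLp (rotatedCarreDuChamp μ f f θ) 2 (μ.prod μ) :=
    ((IsSubexp.rotatedCarreDuChamp hf hf).comp_prodMk θ).memLp_two
  rw [covariance_eq_sub (.of_bound hweight_fst C (ae_of_all _ fun p ↦ hC _)) hK,
    integral_comp_of_measurePreserving measurePreserving_fst hweight.aestronglyMeasurable]
  simp only [Pi.mul_apply, rotatedCarreDuChamp_comp hf (hψ.differentiable one_ne_zero)]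

lemma abs_covariance_sub_le (hμ : μ[id] = 0) {f : E → ℝ} (hf : IsC1Subexp f) {D : ℝ}
    (hD : ∀ θ, √Var[rotatedCarreDuChamp μ f f θ; μ.prod μ] ≤ D)
    {ψ : ℝ → ℝ} (hψ : ContDiff ℝ 1 ψ) (hψ' : ∀ t, |deriv ψ t| ≤ 1) :
    |cov[fun x ↦ ψ (f x), f; μ] - (∫ x, deriv ψ (f x) ∂μ) * Var[f; μ]| ≤ D := by
  have hψf : IsC1Subexp fun x ↦ ψ (f x) := hf.comp_of_deriv_bounded hψ hψ'
  have hψK := continuous_integral_rotatedCarreDuChamp (μ := μ) hψf hf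
  have hK := (continuous_integral_rotatedCarreDuChamp (μ := μ) hf hf).const_mul
    (∫ x, deriv ψ (f x) ∂μ)
  have hcov_le (θ : ℝ) :
      |cov[fun p : E × E ↦ deriv ψ (f p.1), rotatedCarreDuChamp μ f f θ; μ.prod μ]| ≤ D :=
    (abs_covariance_le_sqrt_variance ((hψ.continuous_deriv le_rfl).comp
      (hf.isSubexp.continuous.comp continuous_fst)).aestronglyMeasurable (fun p ↦ hψ' _)
      ((IsSubexp.rotatedCarreDuChamp hf hf).comp_prodMk θ).memLp_two).trans (hD θ)
  simp only [covariance_rotatedCarreDuChamp hf hψ hψ'] at hcov_le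
  refine (congrArg abs ?_).trans_le (abs_integral_sin_mul_le (hψK.fun_sub hK) hcov_le)
  simp only [mul_sub]
  rw [intervalIntegral.integral_sub ((continuous_sin.fun_mul hψK).intervalIntegrable _ _)
    ((continuous_sin.fun_mul hK).intervalIntegrable _ _)]
  simp only [mul_left_comm (sin _), intervalIntegral.integral_const_mul]
  rw [← covariance_self hf.isSubexp.continuous.aemeasurable,
    covariance_eq_integral_rotatedCopy hμ hf hf, covariance_eq_integral_rotatedCopy hμ hψf hf]

end SteinDiscrepancy

lemma setIntegral_le_mul_measureReal {Ω : Type*} [MeasurableSpace Ω] {P : Measure Ω}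
    [IsFiniteMeasure P] {s : Set Ω} (hs : MeasurableSet s) {g : Ω → ℝ} {c : ℝ}
    (hg : IntegrableOn g s P) (hle : ∀ ω ∈ s, g ω ≤ c) : ∫ ω in s, g ω ∂P ≤ c * P.real s := by
  rw [mul_comm, ← smul_eq_mul, ← setIntegral_const]
  exact setIntegral_mono_on hg integrableOn_const hs hle

section SteinEquation

open Set
open scoped NNReal

variable {v : ℝ≥0}

lemma hasDerivAt_gaussianPDFReal (x : ℝ) :
    HasDerivAt (gaussianPDFReal 0 v) (-(x / v) * gaussianPDFReal 0 v x) x := by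
  have hexponent : HasDerivAt (fun x : ℝ ↦ -(x - 0) ^ 2 / (2 * v)) (-(x / v)) x := by
    convert! (((hasDerivAt_id x).sub_const 0).pow 2).neg.div_const (2 * (v : ℝ)) using 1
    simp only [id, sub_zero]
    ring
  rw [gaussianPDFReal_def]
  convert! hexponent.exp.const_mul (√(2 * π * v))⁻¹ using 1
  ring

lemma continuous_gaussianPDFReal : Continuous (gaussianPDFReal 0 v) :=
  continuous_iff_continuousAt.2 fun x ↦ (hasDerivAt_gaussianPDFReal x).continuousAt

lemma setIntegral_gaussianReal (hv : v ≠ 0) {s : Set ℝ} (hs : MeasurableSet s) (g : ℝ → ℝ) :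
    ∫ y in s, g y ∂gaussianReal 0 v = ∫ y in s, gaussianPDFReal 0 v y * g y := by
  simp only [gaussianReal_of_var_ne_zero 0 hv, ← toReal_gaussianPDF, ← smul_eq_mul,
    setIntegral_withDensity_eq_setIntegral_toReal_smul (measurable_gaussianPDF 0 v)
      (ae_of_all _ fun _ ↦ gaussianPDF_lt_top) g hs]

lemma integrable_gaussianReal_iff (hv : v ≠ 0) {g : ℝ → ℝ} :
    Integrable g (gaussianReal 0 v) ↔ Integrable fun y ↦ gaussianPDFReal 0 v y * g y := by
  simp only [gaussianReal_of_var_ne_zero 0 hv, ← toReal_gaussianPDF, ← smul_eq_mul,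
    integrable_withDensity_iff_integrable_smul' (measurable_gaussianPDF 0 v)
      (ae_of_all _ fun _ ↦ gaussianPDF_lt_top)]

lemma hasDerivAt_setIntegral_Iic_gaussianReal (hv : v ≠ 0) {g : ℝ → ℝ} (hg : Continuous g)
    (hg_int : Integrable g (gaussianReal 0 v)) (x : ℝ) :
    HasDerivAt (fun x ↦ ∫ y in Iic x, g y ∂gaussianReal 0 v) (gaussianPDFReal 0 v x * g x) x := by
  have hint := (integrable_gaussianReal_iff hv).1 hg_int
  have hcont : Continuous fun y ↦ gaussianPDFReal 0 v y * g y := continuous_gaussianPDFReal.mul hg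
  have hsplit (x : ℝ) : ∫ y in Iic x, g y ∂gaussianReal 0 v
      = (∫ y in Iic 0, gaussianPDFReal 0 v y * g y)
        + ∫ y in (0 : ℝ)..x, gaussianPDFReal 0 v y * g y := by
    rw [setIntegral_gaussianReal hv measurableSet_Iic,
      ← intervalIntegral.integral_Iic_sub_Iic hint.integrableOn hint.integrableOn,
      add_sub_cancel]
  simp only [hsplit]
  exact (intervalIntegral.integral_hasDerivAt_right hint.intervalIntegrable
    (hcont.stronglyMeasurableAtFilter _ _) hcont.continuousAt).const_add _

lemma integrable_fun_id_gaussianReal : Integrable (fun x ↦ x) (gaussianReal 0 v) :=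
  (memLp_id_gaussianReal 1).integrable le_rfl

lemma setIntegral_Iic_id_gaussianReal (hv : v ≠ 0) (x : ℝ) :
    ∫ y in Iic x, y ∂gaussianReal 0 v = -(v * gaussianPDFReal 0 v x) := by
  have hderiv_int : Integrable fun y ↦ -(y / v) * gaussianPDFReal 0 v y := by
    refine (((integrable_gaussianReal_iff hv).1 integrable_fun_id_gaussianReal).const_mul
      (-(v : ℝ)⁻¹)).congr (ae_of_all _ fun y ↦ ?_)
    ring
  have hftc := integral_Iic_of_hasDerivAt_of_tendsto' (a := x)
    (fun y _ ↦ hasDerivAt_gaussianPDFReal (v := v) y) hderiv_int.integrableOn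
    (tendsto_zero_of_hasDerivAt_of_integrableOn_Iic (a := x)
      (fun y _ ↦ hasDerivAt_gaussianPDFReal y) hderiv_int.integrableOn
      (integrable_gaussianPDFReal 0 v).integrableOn)
  rw [setIntegral_gaussianReal hv measurableSet_Iic, ← sub_zero (gaussianPDFReal 0 v x), ← hftc,
    ← integral_const_mul, ← integral_neg]
  congr with y
  field_simp

lemma setIntegral_Ioi_id_gaussianReal (hv : v ≠ 0) (x : ℝ) :
    ∫ y in Ioi x, y ∂gaussianReal 0 v = v * gaussianPDFReal 0 v x := by
  rw [← compl_Iic, setIntegral_compl measurableSet_Iic integrable_fun_id_gaussianReal,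
    integral_id_gaussianReal, setIntegral_Iic_id_gaussianReal hv, zero_sub, neg_neg]

lemma mul_measureReal_Ioi_gaussianReal_le (hv : v ≠ 0) (x : ℝ) :
    x * (gaussianReal 0 v).real (Ioi x) ≤ v * gaussianPDFReal 0 v x :=
  (setIntegral_ge_of_const_le_real measurableSet_Ioi (measure_ne_top _ _) (fun _ hy ↦ le_of_lt hy)
    integrable_fun_id_gaussianReal.integrableOn).trans_eq (setIntegral_Ioi_id_gaussianReal hv x)

lemma neg_le_mul_measureReal_Iic_gaussianReal (hv : v ≠ 0) (x : ℝ) :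
    -(v * gaussianPDFReal 0 v x) ≤ x * (gaussianReal 0 v).real (Iic x) := by
  rw [← setIntegral_Iic_id_gaussianReal hv]
  exact setIntegral_le_mul_measureReal measurableSet_Iic integrable_fun_id_gaussianReal.integrableOn
    fun _ hy ↦ hy

/-- The solution `ψ` of the Stein equation `ψ' x - (x / v) ψ x = h x - 𝔼 h(N)`, `N ~ N(0, v)`,
which is bounded when `h` is. -/
noncomputable def steinSolution (v : ℝ≥0) (h : ℝ → ℝ) (x : ℝ) : ℝ :=
  (∫ y in Iic x, (h y - ∫ z, h z ∂gaussianReal 0 v) ∂gaussianReal 0 v) / gaussianPDFReal 0 v x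

lemma hasDerivAt_steinSolution (hv : v ≠ 0) {h : ℝ → ℝ} (hh : Continuous h)
    (hh_int : Integrable h (gaussianReal 0 v)) (x : ℝ) :
    HasDerivAt (steinSolution v h)
      (h x - (∫ z, h z ∂gaussianReal 0 v) + x / v * steinSolution v h x) x := by
  have hpos := gaussianPDFReal_pos 0 v x hv
  have hcentered_int : Integrable (fun y ↦ h y - ∫ z, h z ∂gaussianReal 0 v) (gaussianReal 0 v) :=
    hh_int.sub (integrable_const _)
  refine ((hasDerivAt_setIntegral_Iic_gaussianReal hv (hh.fun_sub continuous_const)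
    hcentered_int x).fun_div (hasDerivAt_gaussianPDFReal x) hpos.ne').congr_deriv ?_
  rw [steinSolution]
  field_simp
  ring

lemma contDiff_steinSolution (hv : v ≠ 0) {h : ℝ → ℝ} (hh : Continuous h)
    (hh_int : Integrable h (gaussianReal 0 v)) : ContDiff ℝ 1 (steinSolution v h) := by
  have hderiv := hasDerivAt_steinSolution hv hh hh_int
  have hdiff : Differentiable ℝ (steinSolution v h) := fun x ↦ (hderiv x).differentiableAt
  refine contDiff_one_iff_deriv.2 ⟨hdiff, ?_⟩
  rw [funext fun x ↦ (hderiv x).deriv]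
  have := hdiff.continuous
  fun_prop

lemma steinSolution_eq {h : ℝ → ℝ} (hh : Integrable h (gaussianReal 0 v)) (x : ℝ) :
    steinSolution v h x = ((∫ y in Iic x, h y ∂gaussianReal 0 v) * (gaussianReal 0 v).real (Ioi x)
      - (∫ y in Ioi x, h y ∂gaussianReal 0 v) * (gaussianReal 0 v).real (Iic x))
        / gaussianPDFReal 0 v x := by
  rw [steinSolution, integral_sub hh.integrableOn integrableOn_const, setIntegral_const,
    ← integral_add_compl (measurableSet_Iic (a := x)) hh, ← compl_Iic,
    probReal_compl_eq_one_sub measurableSet_Iic, smul_eq_mul]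
  ring

-- Writing `κ = Φ * (1 - a * Φ')`, which lies in `[0, 1]`, the quantity lies between
-- `-(1 - h) * κ` and `h * (1 - κ)`.
lemma abs_sub_mul_sub_mul_le_one {h A B Φ Φ' a : ℝ} (hΦ : 0 ≤ Φ) (hΦ' : 0 ≤ Φ') (hΦΦ' : Φ + Φ' = 1)
    (hh₀ : 0 ≤ h) (hh₁ : h ≤ 1) (hA : A ∈ Icc (h * Φ) Φ) (hB : B ∈ Icc 0 (h * Φ'))
    (haΦ' : a * Φ' ≤ 1) (haΦ : -1 ≤ a * Φ) :
    |h - A * (1 - a * Φ') - B * (1 + a * Φ)| ≤ 1 := by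
  obtain rfl : Φ' = 1 - Φ := by linarith
  have hκ₀ : 0 ≤ Φ * (1 - a * (1 - Φ)) := mul_nonneg hΦ (by linarith)
  have hκ₁ : 0 ≤ (1 - Φ) * (1 + a * Φ) := mul_nonneg hΦ' (by linarith)
  have hA₀ : h * Φ * (1 - a * (1 - Φ)) ≤ A * (1 - a * (1 - Φ)) :=
    mul_le_mul_of_nonneg_right hA.1 (by linarith)
  have hA₁ : A * (1 - a * (1 - Φ)) ≤ Φ * (1 - a * (1 - Φ)) :=
    mul_le_mul_of_nonneg_right hA.2 (by linarith)
  have hB₀ : 0 ≤ B * (1 + a * Φ) := mul_nonneg hB.1 (by linarith)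
  have hB₁ : B * (1 + a * Φ) ≤ h * (1 - Φ) * (1 + a * Φ) :=
    mul_le_mul_of_nonneg_right hB.2 (by linarith)
  rw [abs_le]
  constructor <;> nlinarith

lemma abs_deriv_steinSolution_le_one (hv : v ≠ 0) {h : ℝ → ℝ} (hh : Continuous h)
    (hh_anti : Antitone h) (hh_mem : ∀ x, h x ∈ Icc 0 1) (x : ℝ) :
    |deriv (steinSolution v h) x| ≤ 1 := by
  have hint : Integrable h (gaussianReal 0 v) :=
    .of_mem_Icc 0 1 hh.aemeasurable (ae_of_all _ hh_mem)
  have hpdf := gaussianPDFReal_pos 0 v x hv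
  have hvpdf : 0 < v * gaussianPDFReal 0 v x := mul_pos (by positivity) hpdf
  have hmass := measureReal_add_measureReal_compl (μ := gaussianReal 0 v)
    (measurableSet_Iic (a := x))
  rw [compl_Iic, probReal_univ] at hmass
  have hIic : ∫ y in Iic x, h y ∂gaussianReal 0 v
      ∈ Icc (h x * (gaussianReal 0 v).real (Iic x)) ((gaussianReal 0 v).real (Iic x)) :=
    ⟨setIntegral_ge_of_const_le_real measurableSet_Iic (measure_ne_top _ _)
      (fun _ hy ↦ hh_anti hy) hint.integrableOn,
      (setIntegral_le_mul_measureReal measurableSet_Iic hint.integrableOn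
        fun y _ ↦ (hh_mem y).2).trans_eq (one_mul _)⟩
  have hIoi : ∫ y in Ioi x, h y ∂gaussianReal 0 v
      ∈ Icc 0 (h x * (gaussianReal 0 v).real (Ioi x)) :=
    ⟨setIntegral_nonneg measurableSet_Ioi fun y _ ↦ (hh_mem y).1,
      setIntegral_le_mul_measureReal measurableSet_Ioi hint.integrableOn
        fun _ hy ↦ hh_anti (le_of_lt hy)⟩
  have hcombine := abs_sub_mul_sub_mul_le_one (a := x / (v * gaussianPDFReal 0 v x))
    measureReal_nonneg measureReal_nonneg hmass (hh_mem x).1 (hh_mem x).2 hIic hIoi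
    (by rw [div_mul_eq_mul_div, div_le_one hvpdf]; exact mul_measureReal_Ioi_gaussianReal_le hv x)
    (by rw [div_mul_eq_mul_div, le_div_iff₀ hvpdf, neg_one_mul]
        exact neg_le_mul_measureReal_Iic_gaussianReal hv x)
  convert hcombine using 2
  rw [(hasDerivAt_steinSolution hv hh hint x).deriv, steinSolution_eq hint,
    ← integral_add_compl (measurableSet_Iic (a := x)) hint, compl_Iic]
  field_simp
  ring

end SteinEquation

section KolmogorovDistance

open Set Filter Topology
open scoped NNReal

lemma infEDist_Iic_mono (z : ℝ) : Monotone fun x ↦ Metric.infEDist x (Iic z) := by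
  intro x y hxy
  refine Metric.le_infEDist.2 fun w hw ↦
    (Metric.infEDist_le_edist_of_mem (mem_Iic.2 (min_le_of_left_le hw : min w x ≤ z))).trans ?_
  rw [edist_dist, edist_dist, Real.dist_eq, Real.dist_eq]
  apply ENNReal.ofReal_le_ofReal
  rw [abs_of_nonneg (sub_nonneg.2 (min_le_right w x))]
  rcases min_cases w x with ⟨hmin, -⟩ | ⟨hmin, -⟩ <;> rw [hmin]
  · linarith [le_abs_self (y - w)]
  · simp

lemma dKS_le_of_forall_antitone {μ ν : Measure ℝ} [IsProbabilityMeasure μ] [IsProbabilityMeasure ν]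
    {C : ℝ} (hC : ∀ h : ℝ → ℝ, Continuous h → Antitone h → (∀ x, h x ∈ Icc 0 1) →
      |∫ x, h x ∂μ - ∫ x, h x ∂ν| ≤ C) : dKS μ ν ≤ C := by
  refine ciSup_le fun z ↦ ?_
  have hδ_pos (n : ℕ) : 0 < 1 / ((n : ℝ) + 1) := by positivity
  have htendsto (ρ : Measure ℝ) [IsProbabilityMeasure ρ] :=
    tendsto_integral_thickenedIndicator_of_isClosed ρ (isClosed_Iic (a := z)) hδ_pos
      tendsto_one_div_add_atTop_nhds_zero_nat
  refine le_of_tendsto' ((htendsto μ).sub (htendsto ν)).abs fun n ↦ hC _ ?_ ?_ fun x ↦ ?_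
  · exact NNReal.continuous_coe.comp (thickenedIndicator (hδ_pos n) (Iic z)).continuous
  · exact fun x y hxy ↦ NNReal.coe_le_coe.2
      (thickenedIndicator_mono_infEDist (hδ_pos n) (infEDist_Iic_mono z hxy))
  · exact ⟨NNReal.coe_nonneg _, thickenedIndicator_le_one _ _ x⟩

variable {E : Type*} [NormedAddCommGroup E] [NormedSpace ℝ E] [CompleteSpace E]
  [SecondCountableTopology E] [MeasurableSpace E] [BorelSpace E] {μ : Measure E} [IsGaussian μ]

lemma integral_comp_sub_integral_gaussianReal {f : E → ℝ} (hf : IsC1Subexp f) (hf_mean : μ[f] = 0)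
    {v : ℝ≥0} (hv : v ≠ 0) {h : ℝ → ℝ} (hh : Continuous h) (hh_anti : Antitone h)
    (hh_mem : ∀ x, h x ∈ Icc 0 1) :
    ∫ x, h (f x) ∂μ - ∫ z, h z ∂gaussianReal 0 v
      = ∫ x, deriv (steinSolution v h) (f x) ∂μ
        - cov[fun x ↦ steinSolution v h (f x), f; μ] / v := by
  set ψ := steinSolution v h
  have hh_int : Integrable h (gaussianReal 0 v) :=
    .of_mem_Icc 0 1 hh.aemeasurable (ae_of_all _ hh_mem)
  have hhf_int : Integrable (fun x ↦ h (f x)) μ :=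
    .of_mem_Icc 0 1 (hh.comp hf.isSubexp.continuous).aemeasurable (ae_of_all _ fun x ↦ hh_mem _)
  have hψ : ContDiff ℝ 1 ψ := contDiff_steinSolution hv hh hh_int
  have hψ' : ∀ t, |deriv ψ t| ≤ 1 := abs_deriv_steinSolution_le_one hv hh hh_anti hh_mem
  have hψf : IsC1Subexp fun x ↦ ψ (f x) := hf.comp_of_deriv_bounded hψ hψ'
  have hψ'_int : Integrable (fun x ↦ deriv ψ (f x)) μ :=
    .of_bound ((hψ.continuous_deriv le_rfl).comp hf.isSubexp.continuous).aestronglyMeasurable 1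
      (ae_of_all _ fun x ↦ hψ' _)
  have stein_equation (x : E) : h (f x) - ∫ z, h z ∂gaussianReal 0 v
      = deriv ψ (f x) - ψ (f x) * f x / v := by
    rw [(hasDerivAt_steinSolution hv hh hh_int (f x)).deriv]
    ring
  calc _ = ∫ x, (h (f x) - ∫ z, h z ∂gaussianReal 0 v) ∂μ := by
        rw [integral_sub hhf_int (integrable_const _), integral_const, probReal_univ,
          one_smul]
    _ = (∫ x, deriv ψ (f x) ∂μ) - (∫ x, ψ (f x) * f x ∂μ) / v := by
        simp only [stein_equation]
        rw [integral_sub hψ'_int ((hψf.isSubexp.mul hf.isSubexp).integrable.div_const _),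
          integral_div]
    _ = _ := by
        rw [covariance_eq_sub hψf.isSubexp.memLp_two hf.isSubexp.memLp_two, hf_mean, mul_zero,
          sub_zero]
        rfl

theorem dKS_map_gaussianReal_le (hμ : μ[id] = 0) {f : E → ℝ} (hf : IsC1Subexp f)
    (hf_mean : μ[f] = 0) {v : ℝ≥0} (hv : v ≠ 0) (hf_var : Var[f; μ] = v) {D : ℝ}
    (hD : ∀ θ, √Var[rotatedCarreDuChamp μ f f θ; μ.prod μ] ≤ D) :
    dKS (μ.map f) (gaussianReal 0 v) ≤ D / v := by
  have hf_meas : AEMeasurable f μ := hf.isSubexp.continuous.aemeasurable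
  have := Measure.isProbabilityMeasure_map hf_meas
  refine dKS_le_of_forall_antitone fun h hh hh_anti hh_mem ↦ ?_
  have hh_int : Integrable h (gaussianReal 0 v) :=
    .of_mem_Icc 0 1 hh.aemeasurable (ae_of_all _ hh_mem)
  have hdisc := abs_covariance_sub_le hμ hf hD (contDiff_steinSolution hv hh hh_int)
    (abs_deriv_steinSolution_le_one hv hh hh_anti hh_mem)
  have hv_pos : (0 : ℝ) < v := by positivity
  rw [integral_map hf_meas hh.aestronglyMeasurable,
    integral_comp_sub_integral_gaussianReal hf hf_mean hv hh hh_anti hh_mem, le_div_iff₀ hv_pos,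
    ← abs_of_pos hv_pos, ← abs_mul, abs_of_pos hv_pos, sub_mul, div_mul_cancel₀ _ hv_pos.ne',
    abs_sub_comm, ← hf_var]
  exact hdisc

end KolmogorovDistance

section SecondOrder

variable {E : Type*} [NormedAddCommGroup E] [NormedSpace ℝ E] [MeasurableSpace E] [BorelSpace E]
  {μ : Measure E}

/-- The contraction `⟨∇²f(x), ∇f(y)⟩` of Hessian and gradient along the Cameron–Martin inner product
of `μ`, as a linear form in the remaining argument of the Hessian. -/
noncomputable def hessianContraction (μ : Measure E) (f : E → ℝ) (x y : E) : StrongDual ℝ E :=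
  (𝒞[μ] (fderiv ℝ f y)).comp (fderiv ℝ (fderiv ℝ f) x)

lemma IsC1Subexp.rotatedCarreDuChamp {f : E → ℝ} (hf' : IsC1Subexp (fderiv ℝ f)) (θ : ℝ) :
    IsC1Subexp (rotatedCarreDuChamp μ f f θ) :=
  .bilin _ (hf'.comp_clm (.fst ℝ E E)) (hf'.comp_clm (rotatedCopy θ))

lemma IsSubexp.covForm_hessianContraction {f : E → ℝ} (hf' : IsC1Subexp (fderiv ℝ f))
    {F : Type*} [NormedAddCommGroup F] [NormedSpace ℝ F] (X Y : F →L[ℝ] E) :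
    IsSubexp fun p ↦ 𝒞[μ] (hessianContraction μ f (X p) (Y p))
      (hessianContraction μ f (X p) (Y p)) := by
  have hcontraction : IsSubexp fun p ↦ hessianContraction μ f (X p) (Y p) :=
    IsSubexp.bilin ((ContinuousLinearMap.compL ℝ E (StrongDual ℝ E) ℝ).comp 𝒞[μ])
      (hf'.isSubexp.comp_clm Y) (hf'.isSubexp_fderiv.comp_clm X)
  exact .bilin _ hcontraction hcontraction

variable [CompleteSpace E] [SecondCountableTopology E] [IsGaussian μ]

lemma integral_id_prod_eq_zero (hμ : μ[id] = 0) : (μ.prod μ)[id] = 0 := by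
  have hid : Integrable id μ := IsSubexp.id.integrable
  calc ∫ p : E × E, (id p.1, id p.2) ∂(μ.prod μ)
      = (∫ p, id p.1 ∂(μ.prod μ), ∫ p, id p.2 ∂(μ.prod μ)) :=
        integral_pair (hid.comp_fst μ) (hid.comp_snd μ)
    _ = 0 := by rw [integral_fun_fst, integral_fun_snd, hμ, smul_zero, Prod.mk_zero_zero]

lemma covForm_comm (L₁ L₂ : StrongDual ℝ E) : 𝒞[μ] L₁ L₂ = 𝒞[μ] L₂ L₁ := by
  simp only [covForm_apply, mul_comm]

lemma covForm_prod_le (hμ : μ[id] = 0) (θ : ℝ) (A B : StrongDual ℝ E) :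
    𝒞[μ.prod μ] (A.comp (.fst ℝ E E) + B.comp (rotatedCopy θ))
        (A.comp (.fst ℝ E E) + B.comp (rotatedCopy θ))
      ≤ 2 * 𝒞[μ] A A + 2 * 𝒞[μ] B B := by
  have hsq (L : StrongDual ℝ E) : IsSubexp fun x ↦ L x * L x :=
    (IsSubexp.id.clm_comp L).mul (IsSubexp.id.clm_comp L)
  have hA : Integrable (fun p : E × E ↦ A p.1 * A p.1) (μ.prod μ) :=
    ((hsq A).comp_clm (.fst ℝ E E)).integrable
  have hB : Integrable (fun p ↦ B (rotatedCopy θ p) * B (rotatedCopy θ p)) (μ.prod μ) :=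
    ((hsq B).comp_clm (rotatedCopy θ)).integrable
  have hsum : IsSubexp fun p : E × E ↦ A p.1 + B (rotatedCopy θ p) :=
    ((IsSubexp.id.clm_comp A).comp_clm (.fst ℝ E E)).add
      ((IsSubexp.id.clm_comp B).comp_clm (rotatedCopy θ))
  simp only [covForm_apply]
  calc _ ≤ ∫ p, (2 * (A p.1 * A p.1) + 2 * (B (rotatedCopy θ p) * B (rotatedCopy θ p)))
          ∂(μ.prod μ) := by
        refine integral_mono (hsum.mul hsum).integrable ((hA.const_mul 2).add (hB.const_mul 2))
          fun p ↦ ?_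
        change (A p.1 + B (rotatedCopy θ p)) * (A p.1 + B (rotatedCopy θ p)) ≤ _
        linarith [sq_nonneg (A p.1 - B (rotatedCopy θ p))]
    _ = _ := by
      rw [integral_add (hA.const_mul 2) (hB.const_mul 2), integral_const_mul, integral_const_mul,
        integral_comp_of_measurePreserving (F := fun x ↦ A x * A x) measurePreserving_fst
          (hsq A).continuous.aestronglyMeasurable,
        integral_comp_of_measurePreserving (F := fun x ↦ B x * B x)
          (measurePreserving_rotatedCopy hμ θ) (hsq B).continuous.aestronglyMeasurable]

lemma fderiv_rotatedCarreDuChamp {f : E → ℝ} (hf' : IsC1Subexp (fderiv ℝ f)) (θ : ℝ) (p : E × E) :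
    fderiv ℝ (rotatedCarreDuChamp μ f f θ) p
      = (hessianContraction μ f p.1 (rotatedCopy θ p)).comp (.fst ℝ E E)
        + (hessianContraction μ f (rotatedCopy θ p) p.1).comp (rotatedCopy θ) := by
  have hfst := (hf'.hasFDerivAt p.1).comp p hasFDerivAt_fst
  have hcopy := (hf'.hasFDerivAt (rotatedCopy θ p)).comp p
    (rotatedCopy (E := E) θ).hasFDerivAt
  refine (𝒞[μ].hasFDerivAt_of_bilinear hfst hcopy).fderiv.trans ?_
  ext v <;> simp [hessianContraction, covForm_comm (fderiv ℝ (fderiv ℝ f) p.1 _), add_comm]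

lemma variance_rotatedCarreDuChamp_le (hμ : μ[id] = 0) {f : E → ℝ}
    (hf' : IsC1Subexp (fderiv ℝ f)) (θ : ℝ) {S : ℝ}
    (hS : ∀ X Y : E × E →L[ℝ] E, MeasurePreserving X (μ.prod μ) μ →
      MeasurePreserving Y (μ.prod μ) μ → ∫ p, 𝒞[μ] (hessianContraction μ f (X p) (Y p))
        (hessianContraction μ f (X p) (Y p)) ∂(μ.prod μ) ≤ S) :
    Var[rotatedCarreDuChamp μ f f θ; μ.prod μ] ≤ 4 * S := by
  have hfst : MeasurePreserving (.fst ℝ E E : E × E →L[ℝ] E) (μ.prod μ) μ := measurePreserving_fst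
  have hcopy := measurePreserving_rotatedCopy hμ θ
  have hint (X Y : E × E →L[ℝ] E) :
      Integrable (fun p ↦ 2 * 𝒞[μ] (hessianContraction μ f (X p) (Y p))
        (hessianContraction μ f (X p) (Y p))) (μ.prod μ) :=
    (IsSubexp.covForm_hessianContraction hf' X Y).integrable.const_mul 2
  have h₁ := hint (.fst ℝ E E) (rotatedCopy θ)
  have h₂ := hint (rotatedCopy θ) (.fst ℝ E E)
  have hK := IsC1Subexp.rotatedCarreDuChamp (μ := μ) hf' θ
  calc _ ≤ _ := gaussian_poincare (integral_id_prod_eq_zero hμ) hK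
    _ ≤ _ := integral_mono (IsSubexp.bilin _ hK.isSubexp_fderiv hK.isSubexp_fderiv).integrable
        (h₁.add h₂) fun p ↦ by
          beta_reduce
          rw [fderiv_rotatedCarreDuChamp hf']
          exact covForm_prod_le hμ θ _ _
    _ ≤ 2 * S + 2 * S := by
        simp only [Pi.add_apply]
        rw [integral_add h₁ h₂, integral_const_mul, integral_const_mul]
        gcongr
        exacts [hS _ _ hfst hcopy, hS _ _ hcopy hfst]
    _ = 4 * S := by ring

end SecondOrder

local notation "γ[" ι "]" => Measure.pi fun _ : ι ↦ gaussianReal 0 1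

section StandardGaussian

variable {ι : Type*} [Fintype ι]

instance isGaussian_pi_gaussianReal : IsGaussian γ[ι] := by
  rw [← isGaussian_map_equiv_iff (EuclideanSpace.equiv ι ℝ).symm]
  exact map_pi_eq_stdGaussian (ι := ι) ▸ isGaussian_stdGaussian

lemma integral_eval_pi_gaussianReal (i : ι) : ∫ x, x i ∂γ[ι] = 0 := by
  rw [integral_comp_eval (μ := fun _ : ι ↦ gaussianReal 0 1) (f := fun t : ℝ ↦ t) (by fun_prop),
    integral_id_gaussianReal]

lemma integral_id_pi_gaussianReal : γ[ι][id] = 0 := by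
  ext i
  have hcomm := (ContinuousLinearMap.proj i : (ι → ℝ) →L[ℝ] ℝ).integral_comp_comm (μ := γ[ι])
    (φ := id) IsSubexp.id.integrable
  exact hcomm.symm.trans (integral_eval_pi_gaussianReal i)

lemma covForm_proj_pi_gaussianReal [DecidableEq ι] (i j : ι) :
    𝒞[γ[ι]] (.proj i) (.proj j) = if i = j then 1 else 0 := by
  rw [covForm_apply]
  simp only [ContinuousLinearMap.proj_apply]
  split_ifs with hij
  · subst hij
    rw [integral_comp_eval (μ := fun _ : ι ↦ gaussianReal 0 1) (f := fun t : ℝ ↦ t * t)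
      (by fun_prop)]
    have hvar := variance_eq_integral (X := id) (μ := gaussianReal 0 1) aemeasurable_id
    simpa [sq] using hvar.symm
  · have hindep := (iIndepFun_pi (μ := fun _ : ι ↦ gaussianReal 0 1) (X := fun _ t ↦ t)
      (by fun_prop)).indepFun hij
    rw [hindep.integral_fun_mul_eq_mul_integral (measurable_pi_apply i).aestronglyMeasurable
      (measurable_pi_apply j).aestronglyMeasurable, integral_eval_pi_gaussianReal, zero_mul]

lemma covForm_pi_gaussianReal [DecidableEq ι] (L₁ L₂ : StrongDual ℝ (ι → ℝ)) :
    𝒞[γ[ι]] L₁ L₂ = ∑ i, L₁ (Pi.single i 1) * L₂ (Pi.single i 1) := by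
  have expand (L : StrongDual ℝ (ι → ℝ)) : L = ∑ i, L (Pi.single i 1) • .proj i := by
    ext v
    conv_lhs => rw [← Finset.univ_sum_single v, map_sum]
    simp only [sum_apply, smul_apply, ContinuousLinearMap.proj_apply]
    exact Finset.sum_congr rfl fun i _ ↦ by
      rw [smul_eq_mul, mul_comm, ← smul_eq_mul, ← map_smul, ← Pi.single_smul, smul_eq_mul, mul_one]
  conv_lhs => rw [expand L₁, expand L₂]
  simp [covForm_proj_pi_gaussianReal, mul_comm]

end StandardGaussian

lemma integral_mul_le_of_measurePreserving {Ω Ω' : Type*} [MeasurableSpace Ω] [MeasurableSpace Ω']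
    {P : Measure Ω} {P' : Measure Ω'} {X Y : Ω → Ω'} (hX : MeasurePreserving X P P')
    (hY : MeasurePreserving Y P P') {a b : Ω' → ℝ} (ha : MemLp a 2 P') (hb : MemLp b 2 P') :
    ∫ ω, a (X ω) * b (Y ω) ∂P
      ≤ (∫ x, a x ^ 2 ∂P') ^ ((1 : ℝ) / 2) * (∫ x, b x ^ 2 ∂P') ^ ((1 : ℝ) / 2) := by
  have haX : MemLp (fun ω ↦ a (X ω)) 2 P := ha.comp_measurePreserving hX
  have hbY : MemLp (fun ω ↦ b (Y ω)) 2 P := hb.comp_measurePreserving hY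
  have hab : Integrable (fun ω ↦ a (X ω) * b (Y ω)) P := haX.integrable_mul hbY
  calc ∫ ω, a (X ω) * b (Y ω) ∂P ≤ ∫ ω, ‖a (X ω)‖ * ‖b (Y ω)‖ ∂P := by
        simp only [← norm_mul]
        exact integral_mono hab hab.norm fun ω ↦ le_norm_self _
    _ ≤ (∫ ω, ‖a (X ω)‖ ^ (2 : ℝ) ∂P) ^ ((1 : ℝ) / 2)
        * (∫ ω, ‖b (Y ω)‖ ^ (2 : ℝ) ∂P) ^ ((1 : ℝ) / 2) :=
      integral_mul_norm_le_Lp_mul_Lq .two_two (by simpa using haX) (by simpa using hbY)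
    _ = _ := by
      simp only [rpow_two, norm_eq_abs, sq_abs]
      rw [integral_comp_of_measurePreserving (F := fun x ↦ a x ^ 2) hX (ha.1.pow 2),
        integral_comp_of_measurePreserving (F := fun x ↦ b x ^ 2) hY (hb.1.pow 2)]

section Coordinates

lemma IsSubexp.of_abs_le_exp_sqrt_sum_sq {ι : Type*} [Fintype ι] {g : (ι → ℝ) → ℝ}
    (hg : Continuous g) {A B : ℝ} (hA : 0 ≤ A) (hB : 0 ≤ B)
    (hle : ∀ x, |g x| ≤ A * exp (B * √(∑ i, x i ^ 2))) : IsSubexp g := by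
  let T : (ι → ℝ) →L[ℝ] EuclideanSpace ℝ ι := (EuclideanSpace.equiv ι ℝ).symm
  refine ⟨hg, A, B * ‖T‖, hA, by positivity, fun x ↦ (hle x).trans ?_⟩
  have hnorm : √(∑ i, x i ^ 2) = ‖T x‖ := by simp [T, EuclideanSpace.norm_eq]
  rw [hnorm, mul_assoc]
  gcongr
  exact T.le_opNorm x

variable {d : ℕ} {f : (Fin d → ℝ) → ℝ}

lemma pderiv2_eq_fderiv_fderiv (hf : ContDiff ℝ 2 f) (l m : Fin d) (x : Fin d → ℝ) :
    pderiv2 f l m x = fderiv ℝ (fderiv ℝ f) x (Pi.single l 1) (Pi.single m 1) := by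
  have hf' := (hf.fderiv_right (m := 1) le_rfl).differentiable one_ne_zero x
  rw [pderiv2, fderiv_clm_apply hf' (differentiableAt_const _)]
  simp

lemma pderiv2_comm (hf : ContDiff ℝ 2 f) (l m : Fin d) (x : Fin d → ℝ) :
    pderiv2 f l m x = pderiv2 f m l x := by
  rw [pderiv2_eq_fderiv_fderiv hf, pderiv2_eq_fderiv_fderiv hf]
  exact hf.contDiffAt.isSymmSndFDerivAt (by simp) _ _

lemma continuous_pderiv1 (hf : ContDiff ℝ 1 f) (l : Fin d) : Continuous (pderiv1 f l) :=
  (hf.continuous_fderiv one_ne_zero).clm_apply continuous_const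

lemma continuous_pderiv2 (hf : ContDiff ℝ 2 f) (l m : Fin d) : Continuous (pderiv2 f l m) := by
  have hf' : ContDiff ℝ 1 (fderiv ℝ f) := hf.fderiv_right le_rfl
  simpa only [funext fun x ↦ pderiv2_eq_fderiv_fderiv hf l m x] using
    ((hf'.continuous_fderiv one_ne_zero).clm_apply continuous_const).clm_apply continuous_const

lemma IsC1Subexp.of_pderiv1 (hf : ContDiff ℝ 1 f) (hf₀ : IsSubexp f)
    (hf₁ : ∀ l, IsSubexp (pderiv1 f l)) : IsC1Subexp f :=
  ⟨hf, hf₀, .of_apply_single hf₁⟩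

lemma IsC1Subexp.fderiv_of_pderiv (hf : ContDiff ℝ 2 f) (hf₁ : ∀ l, IsSubexp (pderiv1 f l))
    (hf₂ : ∀ l m, IsSubexp (pderiv2 f l m)) : IsC1Subexp (fderiv ℝ f) where
  contDiff := hf.fderiv_right le_rfl
  isSubexp := .of_apply_single hf₁
  isSubexp_fderiv := .of_apply_single fun l ↦ .of_apply_single fun m ↦ by
    simpa only [funext fun x ↦ pderiv2_eq_fderiv_fderiv hf l m x] using hf₂ l m

lemma IsC1Subexp.isSubexp_pderiv1 (hf' : IsC1Subexp (fderiv ℝ f)) (l : Fin d) :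
    IsSubexp (pderiv1 f l) :=
  hf'.isSubexp.clm_apply (.const _)

lemma IsC1Subexp.isSubexp_pderiv2 (hf : ContDiff ℝ 2 f) (hf' : IsC1Subexp (fderiv ℝ f))
    (l m : Fin d) : IsSubexp (pderiv2 f l m) := by
  simpa only [funext fun x ↦ pderiv2_eq_fderiv_fderiv hf l m x]
    using (hf'.isSubexp_fderiv.clm_apply (.const _)).clm_apply (.const (Pi.single m 1))

lemma hessianContraction_apply_single (hf : ContDiff ℝ 2 f) (x y : Fin d → ℝ) (s : Fin d) :
    hessianContraction γ[Fin d] f x y (Pi.single s 1) = ∑ l, pderiv2 f l s x * pderiv1 f l y := by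
  rw [hessianContraction, ContinuousLinearMap.comp_apply, covForm_pi_gaussianReal]
  exact Finset.sum_congr rfl fun l _ ↦ by
    rw [pderiv2_comm hf, pderiv2_eq_fderiv_fderiv hf, mul_comm, pderiv1]

lemma covForm_hessianContraction_eq_sum (hf : ContDiff ℝ 2 f) (x y : Fin d → ℝ) :
    𝒞[γ[Fin d]] (hessianContraction γ[Fin d] f x y) (hessianContraction γ[Fin d] f x y)
      = ∑ l, ∑ m, (∑ s, pderiv2 f l s x * pderiv2 f m s x) * (pderiv1 f l y * pderiv1 f m y) := by
  simp only [covForm_pi_gaussianReal, hessianContraction_apply_single hf,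
    Fintype.sum_mul_sum]
  simp only [Finset.sum_mul]
  rw [Finset.sum_comm]
  refine Finset.sum_congr rfl fun l _ ↦ ?_
  rw [Finset.sum_comm]
  exact Finset.sum_congr rfl fun m _ ↦ Finset.sum_congr rfl fun s _ ↦ by ring

/-- The right-hand side of the second order Poincaré inequality under the square root:
`Σ_{l,m} E[⟨∇²_l f, ∇²_m f⟩²]^{1/2} E[(∇_l f ∇_m f)²]^{1/2}`. -/
noncomputable def secondOrderEnergy (f : (Fin d → ℝ) → ℝ) : ℝ :=
  ∑ l, ∑ m, ((∫ x, (∑ s, pderiv2 f l s x * pderiv2 f m s x) ^ 2 ∂γ[Fin d]) ^ ((1 : ℝ) / 2))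
    * ((∫ x, (pderiv1 f l x * pderiv1 f m x) ^ 2 ∂γ[Fin d]) ^ ((1 : ℝ) / 2))

lemma integral_covForm_hessianContraction_le (hf : ContDiff ℝ 2 f)
    (hf' : IsC1Subexp (fderiv ℝ f)) {X Y : (Fin d → ℝ) × (Fin d → ℝ) →L[ℝ] (Fin d → ℝ)}
    (hX : MeasurePreserving X (γ[Fin d].prod γ[Fin d]) γ[Fin d])
    (hY : MeasurePreserving Y (γ[Fin d].prod γ[Fin d]) γ[Fin d]) :
    ∫ p, 𝒞[γ[Fin d]] (hessianContraction γ[Fin d] f (X p) (Y p))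
        (hessianContraction γ[Fin d] f (X p) (Y p)) ∂(γ[Fin d].prod γ[Fin d])
      ≤ secondOrderEnergy f := by
  have hgram (l m : Fin d) : IsSubexp fun x ↦ ∑ s, pderiv2 f l s x * pderiv2 f m s x :=
    .sum fun s ↦ (hf'.isSubexp_pderiv2 hf l s).mul (hf'.isSubexp_pderiv2 hf m s)
  have hgrad (l m : Fin d) : IsSubexp fun x ↦ pderiv1 f l x * pderiv1 f m x :=
    (hf'.isSubexp_pderiv1 l).mul (hf'.isSubexp_pderiv1 m)
  have hint (l m : Fin d) := (((hgram l m).comp_clm X).mul ((hgrad l m).comp_clm Y)).integrable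
    (μ := γ[Fin d].prod γ[Fin d])
  simp only [covForm_hessianContraction_eq_sum hf]
  rw [integral_finsetSum _ fun l _ ↦ integrable_finsetSum _ fun m _ ↦ hint l m]
  refine Finset.sum_le_sum fun l _ ↦ ?_
  rw [integral_finsetSum _ fun m _ ↦ hint l m]
  exact Finset.sum_le_sum fun m _ ↦ integral_mul_le_of_measurePreserving hX hY
    (hgram l m).memLp_two (hgrad l m).memLp_two

theorem dKS_map_pi_gaussianReal_le (hf : ContDiff ℝ 2 f) (hf₁ : IsC1Subexp f)
    (hf₂ : IsC1Subexp (fderiv ℝ f)) (hmean : γ[Fin d][f] = 0) {v : NNReal} (hv : v ≠ 0)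
    (hvar : Var[f; γ[Fin d]] = v) :
    dKS (γ[Fin d].map f) (gaussianReal 0 v) ≤ 2 * √(secondOrderEnergy f) / v := by
  refine dKS_map_gaussianReal_le integral_id_pi_gaussianReal hf₁ hmean hv hvar fun θ ↦ ?_
  calc √_ ≤ √(2 ^ 2 * secondOrderEnergy f) := by
        gcongr
        refine (variance_rotatedCarreDuChamp_le integral_id_pi_gaussianReal hf₂ θ
          fun X Y ↦ integral_covForm_hessianContraction_le hf hf₂).trans_eq (by norm_num)
    _ = 2 * √(secondOrderEnergy f) := by rw [sqrt_mul (by positivity), sqrt_sq zero_le_two]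

end Coordinates

theorem second_order_poincare_ks
    (d : ℕ) (hd : 1 ≤ d) (f : (Fin d → ℝ) → ℝ) (hf : ContDiff ℝ 2 f)
    --  and its partial derivatives of order up to two have sub-exponential growth
    (hgrowth : ∃ A B : ℝ, 0 < A ∧ 0 < B ∧ ∀ x : Fin d → ℝ,
      |f x| ≤ A * Real.exp (B * Real.sqrt (∑ i, (x i) ^ 2)) ∧
      (∀ l, |pderiv1 f l x| ≤ A * Real.exp (B * Real.sqrt (∑ i, (x i) ^ 2))) ∧
      (∀ l m, |pderiv2 f l m x| ≤ A * Real.exp (B * Real.sqrt (∑ i, (x i) ^ 2))))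
    (σ2 : ℝ) (hσ2pos : 0 < σ2)
    (hmean : ∫ x, f x ∂(Measure.pi fun _ : Fin d => gaussianReal 0 1) = 0)
    (hvar : ∫ x, (f x) ^ 2 ∂(Measure.pi fun _ : Fin d => gaussianReal 0 1) = σ2) :
    dKS
      (Measure.map f (Measure.pi fun _ : Fin d => gaussianReal 0 1))
      (gaussianReal 0 σ2.toNNReal)
      ≤ (2 / σ2)
        * Real.sqrt (∑ l, ∑ m,
            ((∫ x, (∑ s, pderiv2 f l s x * pderiv2 f m s x) ^ 2
                ∂(Measure.pi fun _ : Fin d => gaussianReal 0 1)) ^ ((1:ℝ)/2))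
            * ((∫ x, (pderiv1 f l x * pderiv1 f m x) ^ 2
                ∂(Measure.pi fun _ : Fin d => gaussianReal 0 1)) ^ ((1:ℝ)/2))) := by
  obtain ⟨A, B, hA, hB, hle⟩ := hgrowth
  have hf₀ : IsSubexp f :=
    .of_abs_le_exp_sqrt_sum_sq hf.continuous hA.le hB.le fun x ↦ (hle x).1
  have hf₁ (l : Fin d) : IsSubexp (pderiv1 f l) :=
    .of_abs_le_exp_sqrt_sum_sq (continuous_pderiv1 (hf.of_le one_le_two) l) hA.le hB.le
      fun x ↦ (hle x).2.1 l
  have hf₂ (l m : Fin d) : IsSubexp (pderiv2 f l m) :=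
    .of_abs_le_exp_sqrt_sum_sq (continuous_pderiv2 hf l m) hA.le hB.le fun x ↦ (hle x).2.2 l m
  have hσ2 : (σ2.toNNReal : ℝ) = σ2 := coe_toNNReal σ2 hσ2pos.le
  have hf_var : Var[f; Measure.pi fun _ : Fin d ↦ gaussianReal 0 1] = σ2.toNNReal := by
    rw [variance_of_integral_eq_zero hf.continuous.aemeasurable hmean, hvar, hσ2]
  have hdKS := dKS_map_pi_gaussianReal_le hf (.of_pderiv1 (hf.of_le one_le_two) hf₀ hf₁)
    (.fderiv_of_pderiv hf hf₁ hf₂) hmean (toNNReal_pos.2 hσ2pos).ne' hf_var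
  rwa [hσ2, mul_div_right_comm] at hdKS
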